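/- arXiv:1310.7738 — 3 statements merged into one kernel-verified Lean document; each statement's English description precedes it below -/
import Mathlib

section
/- (Classification Theorem) Let V be an arbitrary k-vector space and let f, g be endomorphisms of V each admitting an annihilating polynomial. Then there exists an automorphism τ of V with g = τ f τ^{-1} if and only if: (1) a_g(x) = a_f(x) = p_1(x)^{n_1} ⋯ p_r(x)^{n_r}, the p_j(x) being distinct monic irreducible polynomials in k[x]; and (2) ν_i(V, p_j(f)) = ν_i(V, p_j(g)) for all 1 ≤ j ≤ r and 1 ≤ i ≤ n_j. -/
open Polynomial Module

universe u v w

section Preamble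

variable {k : Type u} [Field k] {V : Type v} [AddCommGroup V] [Module k V]

/-- `Ker p(f)^i`, as a `k[X]`-submodule of `V` viewed as a `k[X]`-module via `f`
(i.e. of the type synonym `Module.AEval' f`, on which `q(x) • v = q(f)(v)`). -/
noncomputable def kerP (f : Module.End k V) (p : k[X]) (i : ℕ) :
    Submodule k[X] (Module.AEval' f) :=
  Submodule.torsionBy k[X] (Module.AEval' f) (p ^ i)

/-- `W_i = Ker p(f)^{i-1} + p(f)(Ker p(f)^{i+1})`, as a `k[X]`-submodule. -/
noncomputable def wSub (f : Module.End k V) (p : k[X]) (i : ℕ) :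
    Submodule k[X] (Module.AEval' f) :=
  kerP f p (i - 1) ⊔ (kerP f p (i + 1)).map (LinearMap.lsmul k[X] (Module.AEval' f) p)

/-- The quotient `Ker p(f)^i / (Ker p(f)^{i-1} + p(f)(Ker p(f)^{i+1}))`, as a `k[X]`-module. -/
abbrev Qmod (f : Module.End k V) (p : k[X]) (i : ℕ) : Type v :=
  kerP f p i ⧸ (wSub f p i).comap (kerP f p i).subtype

theorem qmod_isTorsionBy (f : Module.End k V) (p : k[X]) (i : ℕ) :
    Module.IsTorsionBy k[X] (Qmod f p i) p := by
  intro x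
  obtain ⟨⟨v, hv⟩, rfl⟩ := Submodule.Quotient.mk_surjective _ x
  rw [← Submodule.Quotient.mk_smul, Submodule.Quotient.mk_eq_zero]
  refine Submodule.mem_comap.mpr (Submodule.mem_sup_right ?_)
  refine Submodule.mem_map.mpr ⟨v, ?_, by simp⟩
  rw [kerP, Submodule.mem_torsionBy_iff] at hv ⊢
  rw [pow_succ', mul_smul, hv, smul_zero]

/-- The `K = k[x]/(p(x))`-vector space structure on
`Ker p(f)^i / (Ker p(f)^{i-1} + p(f)(Ker p(f)^{i+1}))`, induced by the `k[x]`-module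
structure `q(x) • v = q(f)(v)`. -/
noncomputable instance qmodModule (f : Module.End k V) (p : k[X]) (i : ℕ) :
    Module (k[X] ⧸ Ideal.span {p}) (Qmod f p i) :=
  (qmod_isTorsionBy f p i).module

/-- The invariant `ν_i(V, p(f))`: the dimension of
`Ker p(f)^i / (Ker p(f)^{i-1} + p(f)(Ker p(f)^{i+1}))` as a vector space over
`K = k[x]/(p(x))`. -/
noncomputable def nu (f : Module.End k V) (p : k[X]) (i : ℕ) : Cardinal.{v} :=
  Module.rank (k[X] ⧸ Ideal.span {p}) (Qmod f p i)

end Preamble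

/-!
View `V` as the `k[X]`-module `AEval' f`; conjugacy of endomorphisms becomes isomorphism of modules.
By the Chinese remainder theorem it suffices to recover each primary component `Ker p(f)^n`, and no
direct sum decomposition of it has to be chosen. Lift a basis of every layer
`Ker p^i / (Ker p^{i-1} + p Ker p^{i+1})`, `1 ≤ i ≤ n`, to elements `v b ∈ Ker p^i`. Modulo
`Ker p^{i-1}` an element of `Ker p^i` is a combination of the `v b` plus an element of
`p Ker p^{i+1}`, so descending induction on `i` shows that the `v b` generate `Ker p^n`. The
elements `p^{i-1} v b` of `Ker p` are independent over `k[X]/(p)`, because `x ∈ Ker p^i` vanishes in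
its layer as soon as `p^{i-1} x ∈ p^i V`; hence the relations among the `v b` are exactly those with
`p^i` dividing the coefficient of each `v b`. These relations depend only on the dimensions `ν_i`.
-/

section PrimaryModule

open Submodule

variable {R : Type*} [CommRing R] {M N : Type*} [AddCommGroup M] [Module R M]
  [AddCommGroup N] [Module R N]

variable (M) in
/-- The submodule `Ker p^{i-1} + p (Ker p^{i+1})` by which `Ker p^i` is divided to form the `i`-th
layer of `M`. For `R = k[X]` and `M = AEval' f` it is `wSub f p i`. -/
def layerKernel (p : R) (i : ℕ) : Submodule R M :=
  torsionBy R M (p ^ (i - 1)) ⊔ (torsionBy R M (p ^ (i + 1))).map (LinearMap.lsmul R M p)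

variable {p : R}

theorem mem_layerKernel_of_pow_smul_eq {i : ℕ} {x z : M} (hx : p ^ (i + 1) • x = 0)
    (hxz : p ^ i • x = p ^ (i + 1) • z) : x ∈ layerKernel M p (i + 1) := by
  have hz : z ∈ torsionBy R M (p ^ (i + 2)) := by
    rw [mem_torsionBy_iff, pow_succ', mul_smul, ← hxz, ← mul_smul, ← pow_succ', hx]
  have hdiff : x - p • z ∈ torsionBy R M (p ^ i) := by
    rw [mem_torsionBy_iff, smul_sub, hxz, ← mul_smul, ← pow_succ, sub_self]
  exact mem_sup.mpr ⟨_, hdiff, _, mem_map_of_mem hz, sub_add_cancel x (p • z)⟩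

theorem mem_layerKernel_of_sum_eq_zero {n : ℕ} {x : ℕ → M} (hx : ∀ i < n, p ^ (i + 1) • x i = 0)
    (hlayer : ∀ i < n, x i ∈ layerKernel M p (i + 1) → p ^ i • x i = 0)
    (hsum : ∑ i ∈ Finset.range n, p ^ i • x i = 0) :
    ∀ i < n, x i ∈ layerKernel M p (i + 1) := by
  intro i
  induction i using Nat.strong_induction_on with
  | _ i ih =>
    intro hi
    have hlow : ∑ j ∈ Finset.range i, p ^ j • x j = 0 := Finset.sum_eq_zero fun j hj ↦
      have hji := Finset.mem_range.mp hj
      hlayer j (hji.trans hi) (ih j hji (hji.trans hi))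
    have hhigh : ∑ j ∈ Finset.Ico (i + 1) n, p ^ j • x j =
        p ^ (i + 1) • ∑ j ∈ Finset.Ico (i + 1) n, p ^ (j - (i + 1)) • x j := by
      rw [Finset.smul_sum]
      refine Finset.sum_congr rfl fun j hj ↦ ?_
      rw [← mul_smul, pow_mul_pow_sub p (Finset.mem_Ico.mp hj).1]
    refine mem_layerKernel_of_pow_smul_eq (hx i hi)
      (z := -∑ j ∈ Finset.Ico (i + 1) n, p ^ (j - (i + 1)) • x j) ?_
    rw [← Finset.sum_range_add_sum_Ico _ (Nat.succ_le_of_lt hi), Finset.sum_range_succ, hlow,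
      zero_add, hhigh] at hsum
    rw [smul_neg]
    exact eq_neg_of_add_eq_zero_left hsum

/-- A family `v` in `M` lifting bases of the first `n` layers of `M` at `p`: the members `v b` with
`level b = i` lie in `Ker p^{i+1}` and represent a basis over `R/(p)` of the layer of index
`i + 1`. Levels start at `0` to avoid truncated subtraction. -/
structure IsLayerBasis {ι : Type*} (p : R) (n : ℕ) (level : ι → ℕ) (v : ι → M) : Prop where
  level_lt : ∀ b, level b < n
  pow_smul_eq_zero : ∀ b, p ^ (level b + 1) • v b = 0
  torsionBy_le : ∀ i < n,
    torsionBy R M (p ^ (i + 1)) ≤ span R (Set.range v) ⊔ layerKernel M p (i + 1)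
  dvd_of_sum_mem : ∀ i < n, ∀ (s : Finset ι) (d : ι → R), (∀ b ∈ s, level b = i) →
    ∑ b ∈ s, d b • v b ∈ layerKernel M p (i + 1) → ∀ b ∈ s, p ∣ d b

namespace IsLayerBasis

variable {ι : Type*} {n : ℕ} {level : ι → ℕ} {v : ι → M} {w : ι → N}

theorem smul_eq_zero_of_dvd (hv : IsLayerBasis p n level v) {b : ι} {r : R}
    (hr : p ^ (level b + 1) ∣ r) : r • v b = 0 := by
  obtain ⟨q, rfl⟩ := hr
  rw [mul_comm, mul_smul, hv.pow_smul_eq_zero, smul_zero]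

theorem dvd_of_sum_pow_mul_smul_eq_zero (hv : IsLayerBasis p n level v) {s : Finset ι} {d : ι → R}
    (hsum : ∑ b ∈ s, (p ^ level b * d b) • v b = 0) : ∀ b ∈ s, p ∣ d b := by
  set x : ℕ → M := fun i ↦ ∑ b ∈ s with level b = i, d b • v b with hx
  have pow_smul_x (i : ℕ) (q : R) : q • x i = ∑ b ∈ s with level b = i, (q * d b) • v b := by
    simp only [hx, Finset.smul_sum, mul_smul]
  have dvd_of_mem {i : ℕ} (hi : i < n) (hxi : x i ∈ layerKernel M p (i + 1)) :=
    hv.dvd_of_sum_mem i hi _ d (fun b hb ↦ (Finset.mem_filter.mp hb).2) hxi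
  have hmem := mem_layerKernel_of_sum_eq_zero (p := p) (n := n) (x := x) ?_ ?_ ?_
  · exact fun b hb ↦ dvd_of_mem (hv.level_lt b) (hmem _ (hv.level_lt b)) b (by simp [hb])
  · refine fun i _ ↦ (pow_smul_x i _).trans (Finset.sum_eq_zero fun b hb ↦ ?_)
    exact hv.smul_eq_zero_of_dvd (by simp [(Finset.mem_filter.mp hb).2])
  · refine fun i hi hxi ↦ (pow_smul_x i _).trans (Finset.sum_eq_zero fun b hb ↦ ?_)
    apply hv.smul_eq_zero_of_dvd
    rw [(Finset.mem_filter.mp hb).2, pow_succ]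
    exact mul_dvd_mul_left _ (dvd_of_mem hi hxi b hb)
  · rw [← hsum, ← Finset.sum_fiberwise_of_maps_to (g := level) (t := Finset.range n)
      (fun b _ ↦ Finset.mem_range.mpr (hv.level_lt b))]
    refine Finset.sum_congr rfl fun i _ ↦ (pow_smul_x i _).trans ?_
    exact Finset.sum_congr rfl fun b hb ↦ by rw [(Finset.mem_filter.mp hb).2]

theorem pow_sub_dvd_of_pow_sub_succ_dvd (hv : IsLayerBasis p n level v) {s : Finset ι}
    {c : ι → R} (hsum : ∑ b ∈ s, c b • v b = 0) {t : ℕ}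
    (hc : ∀ b ∈ s, p ^ (level b - t) ∣ c b) : ∀ b ∈ s, p ^ (level b + 1 - t) ∣ c b := by
  choose! d hd using hc
  have hhigh : ∑ b ∈ s with t ≤ level b, (p ^ level b * d b) • v b = 0 := by
    rw [← smul_zero (p ^ t), ← hsum, Finset.smul_sum, Finset.sum_filter]
    refine Finset.sum_congr rfl fun b hb ↦ ?_
    rw [← mul_smul]
    split_ifs with ht
    · rw [hd b hb, ← mul_assoc, pow_mul_pow_sub p ht]
    · exact (hv.smul_eq_zero_of_dvd (dvd_mul_of_dvd_left (pow_dvd_pow p (by omega)) _)).symm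
  intro b hb
  by_cases ht : t ≤ level b
  · rw [hd b hb, Nat.succ_sub ht, pow_succ]
    exact mul_dvd_mul_left _
      (hv.dvd_of_sum_pow_mul_smul_eq_zero hhigh b (Finset.mem_filter.mpr ⟨hb, ht⟩))
  · simp [Nat.sub_eq_zero_of_le (Nat.succ_le_of_lt (not_le.mp ht))]

theorem pow_dvd_of_sum_eq_zero (hv : IsLayerBasis p n level v) {s : Finset ι} {c : ι → R}
    (hsum : ∑ b ∈ s, c b • v b = 0) : ∀ b ∈ s, p ^ (level b + 1) ∣ c b := by
  suffices h : ∀ t, (∀ b ∈ s, p ^ (level b + 1 - t) ∣ c b) → ∀ b ∈ s, p ^ (level b + 1) ∣ c b from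
    h n fun b _ ↦ by simp [Nat.sub_eq_zero_of_le (Nat.succ_le_of_lt (hv.level_lt b))]
  intro t
  induction t with
  | zero => exact id
  | succ t ih =>
    intro hc
    exact ih <| hv.pow_sub_dvd_of_pow_sub_succ_dvd hsum (by simpa only [Nat.add_sub_add_right]
      using hc)

theorem linearCombination_eq_zero_iff (hv : IsLayerBasis p n level v) {c : ι →₀ R} :
    Finsupp.linearCombination R v c = 0 ↔ ∀ b, p ^ (level b + 1) ∣ c b := by
  rw [Finsupp.linearCombination_apply, Finsupp.sum]
  refine ⟨fun h b ↦ ?_, fun h ↦ Finset.sum_eq_zero fun b _ ↦ hv.smul_eq_zero_of_dvd (h b)⟩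
  by_cases hb : b ∈ c.support
  · exact hv.pow_dvd_of_sum_eq_zero h b hb
  · simp [Finsupp.notMem_support_iff.mp hb]

theorem torsionBy_pow_succ_le_span_sup (hv : IsLayerBasis p n level v)
    (hn : torsionBy R M (p ^ (n + 1)) ≤ torsionBy R M (p ^ n)) {i : ℕ} (hi : i ≤ n) :
    torsionBy R M (p ^ (i + 1)) ≤ span R (Set.range v) ⊔ torsionBy R M (p ^ i) := by
  induction hi using Nat.decreasingInduction with
  | self => exact hn.trans le_sup_right
  | of_succ i hi ih =>
    refine (hv.torsionBy_le i hi).trans (sup_le le_sup_left (sup_le le_sup_right ?_))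
    refine (map_mono ih).trans ?_
    rw [Submodule.map_sup]
    refine sup_le_sup ?_ ?_
    · rintro _ ⟨x, hx, rfl⟩
      exact smul_mem _ p hx
    · rintro _ ⟨x, hx, rfl⟩
      rwa [LinearMap.lsmul_apply, mem_torsionBy_iff, ← mul_smul, ← pow_succ]

theorem span_range_eq_torsionBy (hv : IsLayerBasis p n level v)
    (hn : torsionBy R M (p ^ (n + 1)) ≤ torsionBy R M (p ^ n)) :
    span R (Set.range v) = torsionBy R M (p ^ n) := by
  apply le_antisymm
  · rw [span_le]
    rintro _ ⟨b, rfl⟩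
    exact hv.smul_eq_zero_of_dvd (pow_dvd_pow p (hv.level_lt b))
  · have hle : ∀ i ≤ n, torsionBy R M (p ^ i) ≤ span R (Set.range v) := by
      intro i
      induction i with
      | zero => simp
      | succ i ih =>
        intro hi
        exact (hv.torsionBy_pow_succ_le_span_sup hn (by omega)).trans
          (sup_le le_rfl (ih (by omega)))
    exact hle n le_rfl

theorem nonempty_torsionBy_equiv (hv : IsLayerBasis p n level v) (hw : IsLayerBasis p n level w)
    (hM : torsionBy R M (p ^ (n + 1)) ≤ torsionBy R M (p ^ n))
    (hN : torsionBy R N (p ^ (n + 1)) ≤ torsionBy R N (p ^ n)) :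
    Nonempty (torsionBy R M (p ^ n) ≃ₗ[R] torsionBy R N (p ^ n)) := by
  let Φ := Finsupp.linearCombination R v
  let Ψ := Finsupp.linearCombination R w
  have hker : LinearMap.ker Φ = LinearMap.ker Ψ := by
    ext c
    exact hv.linearCombination_eq_zero_iff.trans hw.linearCombination_eq_zero_iff.symm
  have hΦ : LinearMap.range Φ = torsionBy R M (p ^ n) :=
    (Finsupp.range_linearCombination R).trans (hv.span_range_eq_torsionBy hM)
  have hΨ : LinearMap.range Ψ = torsionBy R N (p ^ n) :=
    (Finsupp.range_linearCombination R).trans (hw.span_range_eq_torsionBy hN)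
  exact ⟨(LinearEquiv.ofEq _ _ hΦ).symm ≪≫ₗ Φ.quotKerEquivRange.symm ≪≫ₗ
    quotEquivOfEq _ _ hker ≪≫ₗ Ψ.quotKerEquivRange ≪≫ₗ LinearEquiv.ofEq _ _ hΨ⟩

end IsLayerBasis

theorem torsionBy_pow_succ_le_of_isCoprime {a : R} {n : ℕ} (hpa : IsCoprime p a)
    (hM : IsTorsionBy R M (p ^ n * a)) :
    torsionBy R M (p ^ (n + 1)) ≤ torsionBy R M (p ^ n) := by
  intro x hx
  obtain ⟨s, t, hst⟩ := hpa
  rw [mem_torsionBy_iff] at hx ⊢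
  have hpow : p ^ n = s * p ^ (n + 1) + t * (p ^ n * a) := by linear_combination -p ^ n * hst
  calc p ^ n • x = (s * p ^ (n + 1) + t * (p ^ n * a)) • x := congrArg (· • x) hpow
    _ = 0 := by rw [add_smul, mul_smul, mul_smul, hx, hM, smul_zero, smul_zero, add_zero]

theorem nonempty_linearEquiv_of_torsionBy {ι : Type*} [Fintype ι] {q : ι → R}
    (hq : Pairwise (Function.onFun IsCoprime q)) (hM : IsTorsionBy R M (∏ j, q j))
    (hN : IsTorsionBy R N (∏ j, q j))
    (h : ∀ j, Nonempty (torsionBy R M (q j) ≃ₗ[R] torsionBy R N (q j))) :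
    Nonempty (M ≃ₗ[R] N) := by
  classical
  have hS := hq.set_pairwise (Finset.univ : Finset ι)
  exact ⟨(LinearEquiv.ofBijective (DirectSum.coeLinearMap _) (torsionBy_isInternal hS hM)).symm ≪≫ₗ
    DFinsupp.mapRange.linearEquiv (fun j ↦ (h j).some) ≪≫ₗ
    LinearEquiv.ofBijective (DirectSum.coeLinearMap _) (torsionBy_isInternal hS hN)⟩

theorem map_torsionBy (e : M ≃ₗ[R] N) (a : R) :
    (torsionBy R M a).map (e : M →ₗ[R] N) = torsionBy R N a := by
  rw [map_equiv_eq_comap_symm]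
  ext y
  simp [← map_smul]

theorem map_layerKernel (e : M ≃ₗ[R] N) (p : R) (i : ℕ) :
    (layerKernel M p i).map (e : M →ₗ[R] N) = layerKernel N p i := by
  have hcomm : (e : M →ₗ[R] N) ∘ₗ LinearMap.lsmul R M p =
      LinearMap.lsmul R N p ∘ₗ (e : M →ₗ[R] N) := by
    ext x
    simp
  rw [layerKernel, Submodule.map_sup, map_torsionBy, ← Submodule.map_comp, hcomm,
    Submodule.map_comp, map_torsionBy, layerKernel]

end PrimaryModule

section QuotientBasis

open Submodule

variable {R : Type*} [CommRing R] {I : Ideal R} {M Q : Type*} [AddCommGroup M] [Module R M]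
  [AddCommGroup Q] [Module R Q] [Module (R ⧸ I) Q] [IsScalarTower R (R ⧸ I) Q]
  {ι : Type*} {π : M →ₗ[R] Q} {x : ι → M}

theorem mem_ideal_of_sum_smul_mem_ker (hx : LinearIndependent (R ⧸ I) (π ∘ x)) {s : Finset ι}
    {d : ι → R} (hsum : ∑ a ∈ s, d a • x a ∈ LinearMap.ker π) : ∀ a ∈ s, d a ∈ I := by
  intro a ha
  rw [← Ideal.Quotient.eq_zero_iff_mem]
  refine linearIndependent_iff'.mp hx s (fun a ↦ algebraMap R (R ⧸ I) (d a)) ?_ a ha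
  simpa only [algebraMap_smul, Function.comp_apply, LinearMap.mem_ker, map_sum, map_smul] using hsum

theorem span_range_sup_ker_eq_top (hx : span (R ⧸ I) (Set.range (π ∘ x)) = ⊤) :
    span R (Set.range x) ⊔ LinearMap.ker π = ⊤ := by
  rw [← comap_map_eq, map_span, ← Set.range_comp,
    ← restrictScalars_span R (R ⧸ I) Ideal.Quotient.mk_surjective, hx]
  rfl

end QuotientBasis

section Endomorphism

open Submodule

variable {k : Type u} [Field k] {V : Type v} [AddCommGroup V] [Module k V]
  {W : Type w} [AddCommGroup W] [Module k W]

instance qmodIsScalarTower (f : End k V) (p : k[X]) (i : ℕ) :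
    IsScalarTower k[X] (k[X] ⧸ Ideal.span {p}) (Qmod f p i) :=
  IsTorsionBySet.isScalarTower _

theorem lift_nu_eq_of_linearEquiv {f : End k V} {g : End k W} (e : AEval' f ≃ₗ[k[X]] AEval' g)
    (p : k[X]) (i : ℕ) : Cardinal.lift.{w} (nu f p i) = Cardinal.lift.{v} (nu g p i) := by
  let eKer : kerP f p i ≃ₗ[k[X]] kerP g p i :=
    e.ofSubmodules _ _ (map_torsionBy e _)
  have hW : ((wSub f p i).comap (kerP f p i).subtype).map (eKer : kerP f p i →ₗ[k[X]] kerP g p i) =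
      (wSub g p i).comap (kerP g p i).subtype := by
    rw [map_equiv_eq_comap_symm]
    exact congrArg (comap (kerP g p i).subtype)
      ((map_equiv_eq_comap_symm e _).symm.trans (map_layerKernel e p i))
  exact ((Quotient.equiv _ _ eKer hW).extendScalarsOfSurjective
    Ideal.Quotient.mk_surjective).lift_rank_eq

theorem kerP_le_span_range_sup_wSub {f : End k V} {p : k[X]} {i : ℕ} {ι : Type*}
    {x : ι → kerP f p i}
    (hx : span (k[X] ⧸ Ideal.span {p}) (Set.range ((mkQ _ : _ →ₗ[k[X]] Qmod f p i) ∘ x)) = ⊤) :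
    kerP f p i ≤ span k[X] (Set.range fun a ↦ (x a : AEval' f)) ⊔ wSub f p i := by
  have hspan := congrArg (map (kerP f p i).subtype) (span_range_sup_ker_eq_top hx)
  rw [ker_mkQ, map_subtype_top, Submodule.map_sup, map_span, ← Set.range_comp] at hspan
  exact hspan.ge.trans (sup_le_sup_left (map_comap_le _ _) _)

theorem dvd_of_sum_smul_mem_wSub {f : End k V} {p : k[X]} {i : ℕ} {ι : Type*}
    {x : ι → kerP f p i}
    (hx : LinearIndependent (k[X] ⧸ Ideal.span {p}) ((mkQ _ : _ →ₗ[k[X]] Qmod f p i) ∘ x))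
    {s : Finset ι} {d : ι → k[X]} (hsum : ∑ a ∈ s, d a • (x a : AEval' f) ∈ wSub f p i) :
    ∀ a ∈ s, p ∣ d a := by
  have hker : ∑ a ∈ s, d a • x a ∈ LinearMap.ker (mkQ _ : _ →ₗ[k[X]] Qmod f p i) := by
    simpa [ker_mkQ] using hsum
  exact fun a ha ↦ Ideal.mem_span_singleton.mp (mem_ideal_of_sum_smul_mem_ker hx hker a ha)

theorem exists_isLayerBasis {f : End k V} {p : k[X]} {n : ℕ} {B : Fin n → Type*}
    (b : ∀ i : Fin n, Basis (B i) (k[X] ⧸ Ideal.span {p}) (Qmod f p (i + 1))) :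
    ∃ v : (Σ i, B i) → AEval' f, IsLayerBasis p n (fun a ↦ (a.1 : ℕ)) v := by
  have hlift (i : Fin n) : ∃ x : B i → kerP f p (i + 1), mkQ _ ∘ x = b i :=
    (mkQ_surjective _).comp_left (b i)
  choose x hx using hlift
  refine ⟨fun a ↦ x a.1 a.2, fun a ↦ a.1.2, fun a ↦ (x a.1 a.2).2, fun i hi ↦ ?_, ?_⟩
  · refine (kerP_le_span_range_sup_wSub ((hx ⟨i, hi⟩).symm ▸ (b ⟨i, hi⟩).span_eq)).trans
      (sup_le_sup_right (span_mono ?_) _)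
    rintro _ ⟨a, rfl⟩
    exact ⟨⟨⟨i, hi⟩, a⟩, rfl⟩
  · intro i _ s d hs hsum ⟨j, a⟩ ha
    obtain rfl : (j : ℕ) = i := hs _ ha
    have hfiber : ∀ c ∈ s, c ∉ Set.range (Sigma.mk j) → d c • (x c.1 c.2 : AEval' f) = 0 := by
      rintro ⟨l, c⟩ hc hcj
      obtain rfl : l = j := Fin.ext (hs _ hc)
      exact absurd ⟨c, rfl⟩ hcj
    rw [← Finset.sum_preimage (Sigma.mk j) s sigma_mk_injective.injOn _ hfiber] at hsum
    exact dvd_of_sum_smul_mem_wSub ((hx j).symm ▸ (b j).linearIndependent) hsum a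
      (Finset.mem_preimage.mpr ha)

theorem nonempty_torsionBy_equiv_of_nu_eq {f : End k V} {g : End k W} {p : k[X]} {n : ℕ}
    (hp : Irreducible p)
    (hf : torsionBy k[X] (AEval' f) (p ^ (n + 1)) ≤ torsionBy k[X] (AEval' f) (p ^ n))
    (hg : torsionBy k[X] (AEval' g) (p ^ (n + 1)) ≤ torsionBy k[X] (AEval' g) (p ^ n))
    (hnu : ∀ i, 1 ≤ i → i ≤ n → Cardinal.lift.{w} (nu f p i) = Cardinal.lift.{v} (nu g p i)) :
    Nonempty (torsionBy k[X] (AEval' f) (p ^ n) ≃ₗ[k[X]] torsionBy k[X] (AEval' g) (p ^ n)) := by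
  have : (Ideal.span {p}).IsMaximal := PrincipalIdealRing.isMaximal_of_irreducible hp
  let := Ideal.Quotient.field (Ideal.span {p})
  have e (i : Fin n) : Qmod f p (i + 1) ≃ₗ[k[X] ⧸ Ideal.span {p}] Qmod g p (i + 1) :=
    (nonempty_linearEquiv_of_lift_rank_eq (hnu (i + 1) (by omega) (by omega))).some
  have b (i : Fin n) := Basis.ofVectorSpace (k[X] ⧸ Ideal.span {p}) (Qmod f p (i + 1))
  obtain ⟨v, hv⟩ := exists_isLayerBasis b
  obtain ⟨w, hw⟩ := exists_isLayerBasis fun i ↦ (b i).map (e i)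
  exact hv.nonempty_torsionBy_equiv hw hf hg

theorem exists_conj_iff_nonempty_linearEquiv {f : End k V} {g : End k W} :
    (∃ τ : V ≃ₗ[k] W, g = ↑τ ∘ₗ f ∘ₗ ↑τ.symm) ↔ Nonempty (AEval' f ≃ₗ[k[X]] AEval' g) := by
  constructor
  · rintro ⟨τ, rfl⟩
    refine ⟨LinearEquiv.ofAEval f (τ ≪≫ₗ AEval'.of _) fun x ↦ ?_⟩
    simp [AEval'.X_smul_of]
  · rintro ⟨e⟩
    refine ⟨AEval'.of f ≪≫ₗ e.restrictScalars k ≪≫ₗ (AEval'.of g).symm, ?_⟩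
    ext x
    apply (AEval'.of g).injective
    simp [← AEval'.X_smul_of]

theorem isTorsionBy_minpoly (f : End k V) : IsTorsionBy k[X] (AEval' f) (minpoly k f) := by
  intro x
  apply (AEval'.of f).symm.injective
  rw [AEval.of_symm_smul, minpoly.aeval]
  simp

theorem nonempty_linearEquiv_of_nu_eq {ι : Type*} [Fintype ι] {f : End k V} {g : End k W}
    {p : ι → k[X]} {n : ι → ℕ} (hirr : ∀ j, Irreducible (p j))
    (hcop : Pairwise (Function.onFun IsCoprime p))
    (hf : IsTorsionBy k[X] (AEval' f) (∏ j, p j ^ n j))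
    (hg : IsTorsionBy k[X] (AEval' g) (∏ j, p j ^ n j))
    (hnu : ∀ j, ∀ i, 1 ≤ i → i ≤ n j →
      Cardinal.lift.{w} (nu f (p j) i) = Cardinal.lift.{v} (nu g (p j) i)) :
    Nonempty (AEval' f ≃ₗ[k[X]] AEval' g) := by
  classical
  refine nonempty_linearEquiv_of_torsionBy (fun i j hij ↦ (hcop hij).pow) hf hg fun j ↦ ?_
  have hprod := Finset.mul_prod_erase Finset.univ (fun j ↦ p j ^ n j) (Finset.mem_univ j)
  have hcompl : IsCoprime (p j) (∏ i ∈ Finset.univ.erase j, p i ^ n i) :=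
    IsCoprime.prod_right fun i hi ↦ (hcop (Finset.ne_of_mem_erase hi).symm).pow_right
  rw [← hprod] at hf hg
  exact nonempty_torsionBy_equiv_of_nu_eq (hirr j) (torsionBy_pow_succ_le_of_isCoprime hcompl hf)
    (torsionBy_pow_succ_le_of_isCoprime hcompl hg) (hnu j)

theorem pairwise_isCoprime_of_monic_of_irreducible {ι : Type*} {p : ι → k[X]}
    (hmonic : ∀ j, (p j).Monic) (hirr : ∀ j, Irreducible (p j)) (hinj : Function.Injective p) :
    Pairwise (Function.onFun IsCoprime p) := fun i j hij ↦
  ((hirr i).isCoprime_or_dvd (p j)).resolve_right fun hdvd ↦ hij <| hinj <|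
    eq_of_monic_of_associated (hmonic i) (hmonic j) ((hirr i).associated_of_dvd (hirr j) hdvd)

theorem stmt_7_general {ι : Type*} [Fintype ι] (f : End k V) (g : End k W)
    (p : ι → k[X]) (n : ι → ℕ) (hmonic : ∀ j, (p j).Monic) (hirr : ∀ j, Irreducible (p j))
    (hinj : Function.Injective p) (hmin : minpoly k f = ∏ j, p j ^ n j) :
    (∃ τ : V ≃ₗ[k] W, g = ↑τ ∘ₗ f ∘ₗ ↑τ.symm) ↔
      (minpoly k g = minpoly k f ∧ ∀ j, ∀ i, 1 ≤ i → i ≤ n j →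
        Cardinal.lift.{w} (nu f (p j) i) = Cardinal.lift.{v} (nu g (p j) i)) := by
  constructor
  · rintro ⟨τ, hτ⟩
    obtain ⟨e⟩ := exists_conj_iff_nonempty_linearEquiv.mp ⟨τ, hτ⟩
    have hconj : g = τ.conjAlgEquiv k f := hτ
    exact ⟨hconj ▸ minpoly.algEquiv_eq _ f, fun j i _ _ ↦ lift_nu_eq_of_linearEquiv e (p j) i⟩
  · rintro ⟨hmin', hnu⟩
    exact exists_conj_iff_nonempty_linearEquiv.mpr <| nonempty_linearEquiv_of_nu_eq hirr
      (pairwise_isCoprime_of_monic_of_irreducible hmonic hirr hinj) (hmin ▸ isTorsionBy_minpoly f)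
      (hmin ▸ hmin' ▸ isTorsionBy_minpoly g) hnu

end Endomorphism

/-- **Classification Theorem.**  Let `V` be an arbitrary `k`-vector space and
let `f, g` be endomorphisms of `V` each admitting an annihilating polynomial, and let
`a_f(x) = p_1(x)^{n_1} ⋯ p_r(x)^{n_r}` be the factorization of the annihilator polynomial of
`f` into powers of distinct monic irreducible polynomials.  Then there exists an automorphism
`τ` of `V` with `g = τ f τ⁻¹` if and only if:
(1) `a_g(x) = a_f(x)`; and
(2) `ν_i(V, p_j(f)) = ν_i(V, p_j(g))` for all `1 ≤ j ≤ r` and `1 ≤ i ≤ n_j`. -/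
theorem stmt_7 {k : Type u} [Field k] {V : Type v} [AddCommGroup V] [Module k V]
    (f g : Module.End k V)
    (hf : ∃ q : k[X], q ≠ 0 ∧ aeval f q = 0)
    (hg : ∃ q : k[X], q ≠ 0 ∧ aeval g q = 0)
    (r : ℕ) (p : Fin r → k[X]) (n : Fin r → ℕ)
    (hmonic : ∀ j, (p j).Monic) (hirr : ∀ j, Irreducible (p j))
    (hdist : ∀ j j', j ≠ j' → p j ≠ p j')
    (hmin : minpoly k f = ∏ j, p j ^ n j) :
    (∃ τ : V ≃ₗ[k] V, g = ↑τ ∘ₗ f ∘ₗ ↑τ.symm) ↔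
      (minpoly k g = minpoly k f ∧
        ∀ j, ∀ i, 1 ≤ i → i ≤ n j → nu f (p j) i = nu g (p j) i) := by
  simpa only [Cardinal.lift_id] using
    stmt_7_general f g p n hmonic hirr (fun i j hij ↦ not_imp_not.mp (hdist i j) hij) hmin
end

section
/- Let V be an arbitrary k-vector space and f an endomorphism of V admitting an annihilating polynomial, with annihilator a_f(x) = p_1(x)^{n_1} ⋯ p_r(x)^{n_r}, the p_j(x) being distinct monic irreducible polynomials with deg p_j = d_j. Then, as cardinals, dim_k V = Σ_{j=1}^{r} Σ_{i=1}^{n_j} i · d_j · ν_i(V, p_j(f)). -/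
open Polynomial Module

universe u v w

/-!
View `V` as a module over `R = k[X]`.  Multiplication by `a` on `Ker ab` has kernel `Ker a`, and
for coprime `a`, `b` its image is all of `Ker b`; hence `dim V = ∑ⱼ dim Ker pⱼ ^ nⱼ`.

For a fixed `a`, put `Gᵢ = aⁱ Ker aⁱ⁺¹`.  Multiplication by `aⁱ` gives
`dim Ker aⁱ⁺¹ = dim Gᵢ + dim Ker aⁱ`, and it identifies `Ker aⁱ⁺¹ / (Ker aⁱ + a Ker aⁱ⁺²)` with
`Gᵢ / Gᵢ₊₁`.  Induction on `n` turns these two relations into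
`dim Ker aⁿ = ∑_{1 ≤ i ≤ n} i · dim (Ker aⁱ / (Ker aⁱ⁻¹ + a Ker aⁱ⁺¹)) + n · dim Gₙ`,
where carrying the last term avoids subtracting cardinals.  Finally `Gₙ = 0` when `V` is killed by
`aⁿ b` with `b` coprime to `a`.
-/

section RankOfSubmodules

variable {k R : Type*} {M N : Type v} [Ring k] [HasRankNullity.{v} k] [Ring R] [SMul k R]
  [AddCommGroup M] [Module k M] [Module R M] [IsScalarTower k R M]
  [AddCommGroup N] [Module k N] [Module R N] [IsScalarTower k R N]

theorem rank_eq_rank_quotient_comap_subtype_add_rank {K W : Submodule R M} (hWK : W ≤ K) :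
    Module.rank k K = Module.rank k (K ⧸ W.comap K.subtype) + Module.rank k W := by
  rw [← ((Submodule.comapSubtypeEquivOfLe hWK).restrictScalars k).rank_eq,
    ← (Submodule.Quotient.restrictScalarsEquiv k (W.comap K.subtype)).rank_eq]
  exact (Submodule.rank_quotient_add_rank ((W.comap K.subtype).restrictScalars k)).symm

theorem ker_mkQ_comp_submoduleMap {K W : Submodule R M} (φ : M →ₗ[R] N) (hWK : W ≤ K)
    (hφ : K ⊓ LinearMap.ker φ ≤ W) :
    LinearMap.ker (((W.map φ).comap (K.map φ).subtype).mkQ ∘ₗ φ.submoduleMap K) =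
      W.comap K.subtype := by
  ext x
  rw [LinearMap.ker_comp, Submodule.ker_mkQ]
  refine ⟨?_, fun hx => Submodule.mem_map_of_mem hx⟩
  rintro ⟨w, hw, hwx : φ w = φ x⟩
  have hdiff : (x : M) - w ∈ W :=
    hφ ⟨K.sub_mem x.2 (hWK hw), LinearMap.sub_mem_ker_iff.mpr hwx.symm⟩
  exact (W.sub_mem_iff_left hw).mp hdiff

theorem rank_map_eq_rank_quotient_add_rank_map {K W : Submodule R M} (φ : M →ₗ[R] N)
    (hWK : W ≤ K) (hφ : K ⊓ LinearMap.ker φ ≤ W) :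
    Module.rank k (K.map φ) =
      Module.rank k (K ⧸ W.comap K.subtype) + Module.rank k (W.map φ) := by
  have e : (K ⧸ W.comap K.subtype) ≃ₗ[R] K.map φ ⧸ (W.map φ).comap (K.map φ).subtype :=
    (Submodule.quotEquivOfEq _ _ (ker_mkQ_comp_submoduleMap φ hWK hφ).symm).trans
      (LinearMap.quotKerEquivOfSurjective _
        ((Submodule.mkQ_surjective _).comp (φ.submoduleMap_surjective K)))
  rw [rank_eq_rank_quotient_comap_subtype_add_rank (k := k) (Submodule.map_mono hWK),
    (e.restrictScalars k).rank_eq]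

variable (k R M) in
theorem rank_bot_restrictScalars : Module.rank k (⊥ : Submodule R M) = 0 :=
  have := nontrivial_of_hasRankNullity.{v} k
  rank_bot k M

theorem rank_eq_rank_map_add_rank_inf_ker (φ : M →ₗ[R] N) (K : Submodule R M) :
    Module.rank k K =
      Module.rank k (K.map φ) + Module.rank k (K ⊓ LinearMap.ker φ : Submodule R M) := by
  have hmap : (K ⊓ LinearMap.ker φ).map φ = ⊥ :=
    LinearMap.le_ker_iff_map.mp inf_le_right
  rw [rank_map_eq_rank_quotient_add_rank_map φ inf_le_left le_rfl, hmap, rank_bot_restrictScalars,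
    add_zero]
  exact rank_eq_rank_quotient_comap_subtype_add_rank inf_le_left

end RankOfSubmodules

section Torsion

open Submodule

variable {R : Type*} {M : Type v} [CommRing R] [AddCommGroup M] [Module R M]

theorem torsionBy_mul_inf_ker_lsmul (a b : R) :
    torsionBy R M (a * b) ⊓ LinearMap.ker (LinearMap.lsmul R M a) = torsionBy R M a :=
  inf_eq_right.mpr (torsionBy_le_torsionBy_of_dvd _ _ (dvd_mul_right a b))

theorem map_lsmul_torsionBy_mul_of_isCoprime {a b : R} (hab : IsCoprime a b) :
    (torsionBy R M (a * b)).map (LinearMap.lsmul R M a) = torsionBy R M b := by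
  ext x
  simp only [mem_map, mem_torsionBy_iff, LinearMap.lsmul_apply]
  constructor
  · rintro ⟨y, hy, rfl⟩
    rw [smul_smul, mul_comm, hy]
  · intro hx
    obtain ⟨c, d, hcd⟩ := hab
    refine ⟨c • x, ?_, ?_⟩
    · rw [mul_smul, smul_comm b, hx, smul_zero, smul_zero]
    · calc a • c • x = (c * a + d * b) • x := by
            rw [add_smul, mul_smul d, hx, smul_zero, add_zero, smul_smul, mul_comm]
        _ = x := by rw [hcd, one_smul]

variable (R M) in
/-- The submodule `aⁱ Ker aⁱ⁺¹`, i.e. the elements killed by `a` and divisible by `aⁱ`. These form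
the decreasing filtration whose successive quotients define the Ulm–Kaplansky invariants at `a`. -/
noncomputable def heightSocle (a : R) (i : ℕ) : Submodule R M :=
  (torsionBy R M (a ^ (i + 1))).map (LinearMap.lsmul R M (a ^ i))

theorem heightSocle_eq_bot_of_isCoprime {a b : R} {n : ℕ} (hab : IsCoprime a b)
    (hM : IsTorsionBy R M (a ^ n * b)) : heightSocle R M a n = ⊥ := by
  refine (Submodule.eq_bot_iff _).mpr ?_
  rintro _ ⟨y, hy, rfl⟩
  have ha : a • a ^ n • y = 0 := by rwa [smul_smul, ← pow_succ']
  have hb : b • a ^ n • y = 0 := by rw [smul_smul, mul_comm]; exact @hM y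
  obtain ⟨c, d, hcd⟩ := hab
  calc a ^ n • y = (c * a + d * b) • a ^ n • y := by rw [hcd, one_smul]
    _ = 0 := by rw [add_smul, mul_smul, mul_smul, ha, hb, smul_zero, smul_zero, add_zero]

variable (R M) in
/-- The submodule `Ker aⁱ⁻¹ + a Ker aⁱ⁺¹` of `Ker aⁱ`; for `M = Module.AEval' f` it is `wSub`. -/
noncomputable def torsionLayerKer (a : R) (i : ℕ) : Submodule R M :=
  torsionBy R M (a ^ (i - 1)) ⊔ (torsionBy R M (a ^ (i + 1))).map (LinearMap.lsmul R M a)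

variable (R M) in
/-- The quotient `Ker aⁱ / (Ker aⁱ⁻¹ + a Ker aⁱ⁺¹)`; for `M = Module.AEval' f` it is `Qmod`. -/
abbrev TorsionLayer (a : R) (i : ℕ) : Type v :=
  torsionBy R M (a ^ i) ⧸ (torsionLayerKer R M a i).comap (torsionBy R M (a ^ i)).subtype

theorem torsionLayerKer_le (a : R) (i : ℕ) :
    torsionLayerKer R M a i ≤ torsionBy R M (a ^ i) := by
  refine sup_le (torsionBy_le_torsionBy_of_dvd _ _ (pow_dvd_pow a (Nat.sub_le i 1))) ?_
  rintro _ ⟨y, hy, rfl⟩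
  rwa [LinearMap.lsmul_apply, mem_torsionBy_iff, smul_smul, ← pow_succ]

theorem map_lsmul_pow_torsionLayerKer_succ (a : R) (i : ℕ) :
    (torsionLayerKer R M a (i + 1)).map (LinearMap.lsmul R M (a ^ i)) =
      heightSocle R M a (i + 1) := by
  have hbot : (torsionBy R M (a ^ i)).map (LinearMap.lsmul R M (a ^ i)) = ⊥ :=
    LinearMap.le_ker_iff_map.mp le_rfl
  have hcomp : LinearMap.lsmul R M (a ^ i) ∘ₗ LinearMap.lsmul R M a =
      LinearMap.lsmul R M (a ^ (i + 1)) :=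
    LinearMap.ext fun x => by
      simp only [LinearMap.comp_apply, LinearMap.lsmul_apply, smul_smul, pow_succ]
  rw [torsionLayerKer, Nat.add_sub_cancel, Submodule.map_sup, hbot, bot_sup_eq,
    ← Submodule.map_comp, hcomp, heightSocle]

variable {k : Type*} [Ring k] [HasRankNullity.{v} k] [SMul k R] [Module k M] [IsScalarTower k R M]

theorem rank_torsionBy_mul (a b : R) :
    Module.rank k (torsionBy R M (a * b)) =
      Module.rank k ((torsionBy R M (a * b)).map (LinearMap.lsmul R M a)) +
        Module.rank k (torsionBy R M a) := by
  rw [rank_eq_rank_map_add_rank_inf_ker (LinearMap.lsmul R M a), torsionBy_mul_inf_ker_lsmul]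

theorem rank_torsionBy_prod {ι : Type*} {s : Finset ι} {q : ι → R}
    (hq : (s : Set ι).Pairwise fun i j => IsCoprime (q i) (q j)) :
    Module.rank k (torsionBy R M (∏ i ∈ s, q i)) =
      ∑ i ∈ s, Module.rank k (torsionBy R M (q i)) := by
  classical
  induction s using Finset.induction_on with
  | empty => rw [Finset.prod_empty, Finset.sum_empty, torsionBy_one, rank_bot_restrictScalars]
  | insert i s hi ih =>
    have hcoprime : IsCoprime (q i) (∏ j ∈ s, q j) := IsCoprime.prod_right fun j hj =>
      hq (Finset.mem_insert_self i s) (Finset.mem_insert_of_mem hj)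
        (ne_of_mem_of_not_mem hj hi).symm
    rw [Finset.prod_insert hi, Finset.sum_insert hi, rank_torsionBy_mul,
      map_lsmul_torsionBy_mul_of_isCoprime hcoprime,
      ih (hq.mono (Finset.coe_subset.mpr (Finset.subset_insert i s))), add_comm]

theorem rank_torsionBy_pow_succ (a : R) (i : ℕ) :
    Module.rank k (torsionBy R M (a ^ (i + 1))) =
      Module.rank k (heightSocle R M a i) + Module.rank k (torsionBy R M (a ^ i)) := by
  rw [heightSocle, pow_succ, rank_torsionBy_mul]

theorem rank_heightSocle (a : R) (i : ℕ) :
    Module.rank k (heightSocle R M a i) =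
      Module.rank k (TorsionLayer R M a (i + 1)) + Module.rank k (heightSocle R M a (i + 1)) := by
  have hker : torsionBy R M (a ^ (i + 1)) ⊓ LinearMap.ker (LinearMap.lsmul R M (a ^ i)) ≤
      torsionLayerKer R M a (i + 1) := by
    rw [pow_succ, torsionBy_mul_inf_ker_lsmul]
    exact le_sup_left
  rw [← map_lsmul_pow_torsionLayerKer_succ]
  exact rank_map_eq_rank_quotient_add_rank_map _ (torsionLayerKer_le a (i + 1)) hker

theorem rank_torsionBy_pow (a : R) (n : ℕ) :
    Module.rank k (torsionBy R M (a ^ n)) =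
      ∑ i ∈ Finset.Icc 1 n, (i : Cardinal.{v}) * Module.rank k (TorsionLayer R M a i) +
        n * Module.rank k (heightSocle R M a n) := by
  induction n with
  | zero =>
    rw [pow_zero, torsionBy_one, rank_bot_restrictScalars, Finset.Icc_eq_empty (by decide),
      Finset.sum_empty, Nat.cast_zero, zero_mul, zero_add]
  | succ n ih =>
    rw [rank_torsionBy_pow_succ, ih, Finset.sum_Icc_succ_top (Nat.le_add_left 1 n),
      rank_heightSocle a n]
    push_cast
    ring

theorem rank_eq_sum_rank_torsionLayer {ι : Type*} [Fintype ι] {a : ι → R} {n : ι → ℕ}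
    (ha : Pairwise fun i j => IsCoprime (a i) (a j))
    (hM : IsTorsionBy R M (∏ j, a j ^ n j)) :
    Module.rank k M = ∑ j, ∑ i ∈ Finset.Icc 1 (n j),
      (i : Cardinal.{v}) * Module.rank k (TorsionLayer R M (a j) i) := by
  classical
  have hsocle (j : ι) : heightSocle R M (a j) (n j) = ⊥ := by
    refine heightSocle_eq_bot_of_isCoprime (b := ∏ l ∈ Finset.univ.erase j, a l ^ n l)
      (IsCoprime.prod_right fun l hl => (ha (Finset.ne_of_mem_erase hl).symm).pow_right) ?_
    rwa [Finset.mul_prod_erase _ (fun l => a l ^ n l) (Finset.mem_univ j)]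
  calc Module.rank k M = Module.rank k (torsionBy R M (∏ j, a j ^ n j)) := by
        rw [(isTorsionBy_iff_torsionBy_eq_top _).mp hM]
        exact (topEquiv.restrictScalars k).rank_eq.symm
    _ = ∑ j, Module.rank k (torsionBy R M (a j ^ n j)) :=
        rank_torsionBy_prod fun i _ j _ hij => (ha hij).pow
    _ = _ := Finset.sum_congr rfl fun j _ => by
        rw [rank_torsionBy_pow, hsocle, rank_bot_restrictScalars, mul_zero, add_zero]

end Torsion

section Polynomial

theorem isTorsionBy_aeval'_iff {A W : Type*} [CommRing A] [AddCommGroup W] [Module A W]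
    (g : Module.End A W) {q : A[X]} : IsTorsionBy A[X] (AEval' g) q ↔ aeval g q = 0 := by
  rw [← RingHom.mem_ker, ← AEval.annihilator_eq_ker_aeval (M := W), mem_annihilator]

variable {k : Type u} [Field k]

theorem isCoprime_of_monic_of_irreducible_of_ne {p q : k[X]} (hp : p.Monic) (hq : q.Monic)
    (hp' : Irreducible p) (hq' : Irreducible q) (hpq : p ≠ q) : IsCoprime p q :=
  hp'.coprime_iff_not_dvd.mpr fun hdvd =>
    hpq (eq_of_monic_of_associated hp hq (hp'.associated_of_dvd hq' hdvd))

theorem rank_quotient_span_eq_natDegree {p : k[X]} (hp : p ≠ 0) :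
    Module.rank k (k[X] ⧸ Ideal.span {p}) = p.natDegree := by
  have : Module.Finite k (k[X] ⧸ Ideal.span {p}) := (AdjoinRoot.powerBasis hp).finite
  rw [← finrank_eq_rank, finrank_quotient_span_eq_natDegree]

theorem rank_eq_natDegree_mul_rank_quotient_span {p : k[X]} (hp : Irreducible p) (N : Type v)
    [AddCommGroup N] [Module k N] [Module (k[X] ⧸ Ideal.span {p}) N]
    [IsScalarTower k (k[X] ⧸ Ideal.span {p}) N] :
    Module.rank k N = p.natDegree * Module.rank (k[X] ⧸ Ideal.span {p}) N := by
  have := PrincipalIdealRing.isMaximal_of_irreducible hp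
  let := Ideal.Quotient.field (Ideal.span {p})
  apply Cardinal.lift_injective.{u}
  rw [← lift_rank_mul_lift_rank k (k[X] ⧸ Ideal.span {p}) N,
    rank_quotient_span_eq_natDegree hp.ne_zero]
  simp only [Cardinal.lift_mul, Cardinal.lift_natCast]

variable {V : Type v} [AddCommGroup V] [Module k V] (f : Module.End k V)

theorem rank_Qmod {p : k[X]} (hp : Irreducible p) (i : ℕ) :
    Module.rank k (Qmod f p i) = p.natDegree * nu f p i := by
  have : IsScalarTower k (k[X] ⧸ Ideal.span {p}) (Qmod f p i) :=
    IsTorsionBySet.isScalarTower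
      ((isTorsionBySet_span_singleton_iff p).mpr (qmod_isTorsionBy f p i))
  exact rank_eq_natDegree_mul_rank_quotient_span hp (Qmod f p i)

theorem stmt_11_general {ι : Type*} [Fintype ι] (p : ι → k[X]) (n : ι → ℕ)
    (hirr : ∀ j, Irreducible (p j)) (hcop : Pairwise fun j j' => IsCoprime (p j) (p j'))
    (hann : aeval f (∏ j, p j ^ n j) = 0) :
    Module.rank k V = ∑ j, ∑ i ∈ Finset.Icc 1 (n j),
      (i : Cardinal.{v}) * ((p j).natDegree : Cardinal.{v}) * nu f (p j) i := by
  have hlayer (j : ι) (i : ℕ) : Module.rank k (TorsionLayer k[X] (AEval' f) (p j) i) =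
      (p j).natDegree * nu f (p j) i := rank_Qmod f (hirr j) i
  rw [(AEval'.of f).rank_eq,
    rank_eq_sum_rank_torsionLayer hcop ((isTorsionBy_aeval'_iff f).mpr hann)]
  simp only [hlayer, mul_assoc]

end Polynomial

/-- Let `V` be an arbitrary `k`-vector space and `f` an endomorphism of `V`
admitting an annihilating polynomial, with annihilator
`a_f(x) = p_1(x)^{n_1} ⋯ p_r(x)^{n_r}`, the `p_j(x)` being distinct monic irreducible
polynomials with `deg p_j = d_j`.  Then, as cardinals,
`dim_k V = Σ_{j=1}^{r} Σ_{i=1}^{n_j} i · d_j · ν_i(V, p_j(f))`. -/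
theorem stmt_11 {k : Type u} [Field k] {V : Type v} [AddCommGroup V] [Module k V]
    (f : Module.End k V) (hf : ∃ q : k[X], q ≠ 0 ∧ aeval f q = 0)
    (r : ℕ) (p : Fin r → k[X]) (n : Fin r → ℕ)
    (hmonic : ∀ j, (p j).Monic) (hirr : ∀ j, Irreducible (p j))
    (hdist : ∀ j j', j ≠ j' → p j ≠ p j')
    (hmin : minpoly k f = ∏ j, p j ^ n j) :
    Module.rank k V = ∑ j : Fin r, ∑ i ∈ Finset.Icc 1 (n j),
      (i : Cardinal.{v}) * ((p j).natDegree : Cardinal.{v}) * nu f (p j) i :=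
  stmt_11_general f p n hirr
    (fun j j' h => isCoprime_of_monic_of_irreducible_of_ne (hmonic j) (hmonic j') (hirr j)
      (hirr j') (hdist j j' h))
    (hmin ▸ minpoly.aeval k f)
end

section
/- Let V be a k-vector space of countably infinite dimension. Let p_1(x), …, p_r(x) be distinct monic irreducible polynomials in k[x], let n_1, …, n_r ≥ 1 be natural numbers, and for each 1 ≤ j ≤ r and 1 ≤ i ≤ n_j let ν_{ji} be a cardinal belonging to {0} ∪ ℕ ∪ {ℵ₀}, such that ν_{j n_j} ≠ 0 for every j and ν_{ji} = ℵ₀ for at least one pair (j,i). Then there exists an endomorphism f of V with annihilator polynomial a_f(x) = p_1(x)^{n_1} ⋯ p_r(x)^{n_r} and with ν_i(V, p_j(f)) = ν_{ji} for all 1 ≤ j ≤ r and 1 ≤ i ≤ n_j. -/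
open Polynomial Module

universe u v w

/-!
Realize `V` as the direct sum of the cyclic modules `k[X] ⧸ (p_j ^ i)`, with `ν_{ji}` copies of
each: this has the right dimension because a finite sum of finite nonzero multiples of cardinals
`≤ ℵ₀`, one of them equal to `ℵ₀`, is `ℵ₀`. The annihilator of a direct sum of cyclic modules is
the intersection of the annihilators of the summands, which here is generated by `∏ j, p_j ^ n_j`,
since `ν_{j n_j} ≠ 0`. The quotient defining `ν_i(V, p(f))` is the classical Ulm-Kaplansky quotient
of the `k[X]`-module `V`. It is an additive functor which commutes with direct sums, it is
one-dimensional on `k[X] ⧸ (p ^ i)`, and it vanishes on `k[X] ⧸ (p ^ m)` for `m ≠ i` and on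
`k[X] ⧸ (q)` for `q` coprime to `p`, so that `ν_i(V, p_j(f))` counts the summands
`k[X] ⧸ (p_j ^ i)`.
-/

open Cardinal DirectSum

section Ulm

variable {R : Type*} [CommRing R] (p : R) (i : ℕ)
variable (M : Type*) [AddCommGroup M] [Module R M]
variable {N P : Type*} [AddCommGroup N] [Module R N] [AddCommGroup P] [Module R P]

/-- The submodule `M[p^(i-1)] + p M[p^(i+1)]` of an `R`-module `M`, where `M[a]` is the
`a`-torsion; for `M = Module.AEval' f` it is `wSub f p i`. -/
def ulmDenominator : Submodule R M :=
  Submodule.torsionBy R M (p ^ (i - 1)) ⊔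
    (Submodule.torsionBy R M (p ^ (i + 1))).map (LinearMap.lsmul R M p)

/-- The `i`-th Ulm quotient `M[p^i] / (M[p^(i-1)] + p M[p^(i+1)])` of an `R`-module `M`; for
`M = Module.AEval' f` it is `Qmod f p i`. -/
abbrev UlmQuotient : Type _ :=
  Submodule.torsionBy R M (p ^ i) ⧸
    (ulmDenominator p i M).comap (Submodule.torsionBy R M (p ^ i)).subtype

variable {p i M}

theorem mem_ulmDenominator_iff {x : M} :
    x ∈ ulmDenominator p i M ↔
      ∃ y z : M, p ^ (i - 1) • y = 0 ∧ p ^ (i + 1) • z = 0 ∧ y + p • z = x := by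
  simp [ulmDenominator, Submodule.mem_sup]

theorem map_mem_ulmDenominator (g : M →ₗ[R] N) {x : M} (hx : x ∈ ulmDenominator p i M) :
    g x ∈ ulmDenominator p i N := by
  rw [mem_ulmDenominator_iff] at hx ⊢
  obtain ⟨y, z, hy, hz, rfl⟩ := hx
  exact ⟨g y, g z, by rw [← map_smul, hy, map_zero], by rw [← map_smul, hz, map_zero], by simp⟩

theorem map_mem_torsionBy (g : M →ₗ[R] N) {a : R} {x : M} (hx : x ∈ Submodule.torsionBy R M a) :
    g x ∈ Submodule.torsionBy R N a := by
  rw [Submodule.mem_torsionBy_iff] at hx ⊢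
  rw [← map_smul, hx, map_zero]

namespace UlmQuotient

variable (p i M) in
theorem isTorsionBy : Module.IsTorsionBy R (UlmQuotient p i M) p := by
  intro x
  obtain ⟨⟨x, hx⟩, rfl⟩ := Submodule.Quotient.mk_surjective _ x
  rw [Submodule.mem_torsionBy_iff] at hx
  rw [← Submodule.Quotient.mk_smul, Submodule.Quotient.mk_eq_zero, Submodule.mem_comap,
    mem_ulmDenominator_iff]
  exact ⟨0, x, smul_zero _, by rw [pow_succ', mul_smul, hx, smul_zero], zero_add _⟩

instance : Module (R ⧸ Ideal.span {p}) (UlmQuotient p i M) :=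
  (isTorsionBy p i M).module

instance : IsScalarTower R (R ⧸ Ideal.span {p}) (UlmQuotient p i M) :=
  Module.IsTorsionBySet.isScalarTower ((isTorsionBySet_span_singleton_iff p).mpr <|
      isTorsionBy p i M)

variable (p i) in
/-- The map of Ulm quotients induced by a linear map. -/
def map (g : M →ₗ[R] N) : UlmQuotient p i M →ₗ[R] UlmQuotient p i N :=
  Submodule.mapQ _ _ (g.restrict fun _ => map_mem_torsionBy g) fun _ => map_mem_ulmDenominator g

@[simp]
theorem map_mk (g : M →ₗ[R] N) (x : Submodule.torsionBy R M (p ^ i)) :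
    map p i g (Submodule.Quotient.mk x) =
      Submodule.Quotient.mk ⟨g x, map_mem_torsionBy g x.2⟩ :=
  rfl

theorem map_comp (h : N →ₗ[R] P) (g : M →ₗ[R] N) :
    map p i (h ∘ₗ g) = map p i h ∘ₗ map p i g := by
  ext; rfl

theorem map_id : map p i (.id : M →ₗ[R] M) = .id := by
  ext; rfl

protected theorem map_zero : map p i (0 : M →ₗ[R] N) = 0 := by
  ext; rfl

variable (p i) in
/-- The equivalence of Ulm quotients induced by a linear equivalence. -/
def congr (e : M ≃ₗ[R] N) : UlmQuotient p i M ≃ₗ[R] UlmQuotient p i N :=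
  .ofLinearMap (map p i e) (map p i e.symm)
    (by rw [← map_comp, e.comp_symm, map_id]) (by rw [← map_comp, e.symm_comp, map_id])

section DirectSum

variable {ι : Type*} [DecidableEq ι] (A : ι → Type*) [∀ a, AddCommGroup (A a)]
  [∀ a, Module R (A a)]

variable (p i) in
/-- The canonical map from the direct sum of the Ulm quotients of a family of modules to the Ulm
quotient of its direct sum. -/
def ofDirectSum : (⨁ a, UlmQuotient p i (A a)) →ₗ[R] UlmQuotient p i (⨁ a, A a) :=
  DirectSum.toModule R ι _ fun a => map p i (DirectSum.lof R ι A a)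

theorem map_component_ofDirectSum (a : ι) (x : ⨁ a, UlmQuotient p i (A a)) :
    map p i (DirectSum.component R ι A a) (ofDirectSum p i A x) = x a := by
  suffices h : map p i (DirectSum.component R ι A a) ∘ₗ ofDirectSum p i A =
      DirectSum.component R ι _ a from LinearMap.congr_fun h x
  refine DirectSum.linearMap_ext R fun b => LinearMap.ext fun y => ?_
  rw [LinearMap.comp_apply, LinearMap.comp_apply, ofDirectSum, DirectSum.toModule_lof,
    ← LinearMap.comp_apply, ← map_comp]
  obtain rfl | hab := eq_or_ne b a
  · rw [DirectSum.component_comp_lof_same, map_id, LinearMap.comp_apply,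
      DirectSum.component.lof_self, LinearMap.id_apply]
  · rw [DirectSum.component_comp_lof, dif_neg hab, UlmQuotient.map_zero, LinearMap.comp_apply,
      DirectSum.component.of, dif_neg hab, LinearMap.zero_apply]

theorem ofDirectSum_injective : Function.Injective (ofDirectSum p i A) := fun x y hxy =>
  DFinsupp.ext fun a => by
    rw [← map_component_ofDirectSum A a x, hxy, map_component_ofDirectSum]

theorem ofDirectSum_surjective : Function.Surjective (ofDirectSum p i A) := by
  classical
  intro y
  obtain ⟨⟨x, hx⟩, rfl⟩ := Submodule.Quotient.mk_surjective _ y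
  let summand (a : ι) : Submodule.torsionBy R (A a) (p ^ i) :=
    ⟨x a, map_mem_torsionBy (DirectSum.component R ι A a) hx⟩
  have hx_sum : ⟨x, hx⟩ = ∑ a ∈ DFinsupp.support x,
      (⟨DirectSum.lof R ι A a (summand a), map_mem_torsionBy _ (summand a).2⟩ :
        Submodule.torsionBy R (⨁ a, A a) (p ^ i)) :=
    Subtype.ext <| by
      rw [AddSubmonoidClass.coe_finsetSum]
      exact (DirectSum.sum_support_of x).symm
  refine ⟨∑ a ∈ DFinsupp.support x, DirectSum.lof R ι _ a (Submodule.Quotient.mk (summand a)), ?_⟩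
  rw [hx_sum, ← Submodule.mkQ_apply, map_sum, map_sum]
  simp only [ofDirectSum, DirectSum.toModule_lof, map_mk, Submodule.mkQ_apply]

variable (p i) in
/-- The Ulm quotient commutes with direct sums. -/
noncomputable def directSumEquiv :
    (⨁ a, UlmQuotient p i (A a)) ≃ₗ[R] UlmQuotient p i (⨁ a, A a) :=
  .ofBijective (ofDirectSum p i A) ⟨ofDirectSum_injective A, ofDirectSum_surjective A⟩

end DirectSum

end UlmQuotient

variable (p i M) in
/-- The `i`-th Ulm invariant of `M` at `p`: the dimension of the `i`-th Ulm quotient over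
`R ⧸ (p)`; for `M = Module.AEval' f` it is `nu f p i`. -/
noncomputable def ulmInvariant : Cardinal :=
  Module.rank (R ⧸ Ideal.span {p}) (UlmQuotient p i M)

theorem lift_ulmInvariant_congr {M : Type v} [AddCommGroup M] [Module R M] {N : Type w}
    [AddCommGroup N] [Module R N] (e : M ≃ₗ[R] N) :
    lift.{w} (ulmInvariant p i M) = lift.{v} (ulmInvariant p i N) :=
  ((UlmQuotient.congr p i e).extendScalarsOfSurjective Ideal.Quotient.mk_surjective).lift_rank_eq

theorem ulmInvariant_directSum [(Ideal.span {p}).IsMaximal] {ι : Type v} (A : ι → Type w)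
    [∀ a, AddCommGroup (A a)] [∀ a, Module R (A a)] :
    ulmInvariant p i (⨁ a, A a) = Cardinal.sum fun a => ulmInvariant p i (A a) := by
  classical
  let := Ideal.Quotient.field (Ideal.span {p})
  have : ∀ a, Module.Free (R ⧸ Ideal.span {p}) (UlmQuotient p i (A a)) :=
    fun a => .of_divisionRing _ _
  exact ((UlmQuotient.directSumEquiv p i A).extendScalarsOfSurjective
    Ideal.Quotient.mk_surjective).rank_eq.symm.trans (rank_directSum _ _)

section Cyclic

theorem smul_quotient_mk_eq_zero_iff {q r c : R} :
    r • (Ideal.Quotient.mk (Ideal.span {q}) c) = 0 ↔ q ∣ r * c := by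
  rw [← Ideal.Quotient.mk_eq_mk, ← Submodule.Quotient.mk_smul, Submodule.Quotient.mk_eq_zero,
    Ideal.mem_span_singleton, smul_eq_mul]

theorem ulmInvariant_eq_zero [Nontrivial (R ⧸ Ideal.span {p})]
    (h : Submodule.torsionBy R M (p ^ i) ≤ ulmDenominator p i M) : ulmInvariant p i M = 0 := by
  have : Subsingleton (UlmQuotient p i M) :=
    Submodule.Quotient.subsingleton_iff.mpr (Submodule.comap_subtype_eq_top.mpr h)
  exact rank_subsingleton' _ _

theorem ulmInvariant_quotient_of_isCoprime [Nontrivial (R ⧸ Ideal.span {p})] {q : R}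
    (hpq : IsCoprime p q) : ulmInvariant p i (R ⧸ Ideal.span {q}) = 0 := by
  refine ulmInvariant_eq_zero fun x hx => ?_
  obtain ⟨c, rfl⟩ := Ideal.Quotient.mk_surjective x
  have hc : q ∣ c := hpq.pow_left.symm.dvd_of_dvd_mul_left <|
    smul_quotient_mk_eq_zero_iff.mp ((Submodule.mem_torsionBy_iff _ _).mp hx)
  rw [Ideal.Quotient.eq_zero_iff_dvd _ _ |>.mpr hc]
  exact zero_mem _

variable [IsDomain R] (hp : p ≠ 0)
include hp

theorem ulmInvariant_quotient_pow_of_ne [Nontrivial (R ⧸ Ideal.span {p})] {m : ℕ} (hm : m ≠ i) :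
    ulmInvariant p i (R ⧸ Ideal.span {p ^ m}) = 0 := by
  refine ulmInvariant_eq_zero fun x hx => mem_ulmDenominator_iff.mpr ?_
  obtain ⟨c, rfl⟩ := Ideal.Quotient.mk_surjective x
  obtain hlt | hgt := hm.lt_or_gt
  · have hkill : p ^ m ∣ p ^ (i - 1) * c := (pow_dvd_pow p (by lia)).mul_right c
    exact ⟨_, 0, smul_quotient_mk_eq_zero_iff.mpr hkill, smul_zero _, by simp⟩
  · obtain ⟨d, rfl⟩ : ∃ d, m = i + (d + 1) := ⟨m - i - 1, by lia⟩
    have hdvd : p ^ i * p ^ (d + 1) ∣ p ^ i * c := pow_add p i (d + 1) ▸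
      smul_quotient_mk_eq_zero_iff.mp ((Submodule.mem_torsionBy_iff _ _).mp hx)
    obtain ⟨b, rfl⟩ := (mul_dvd_mul_iff_left (pow_ne_zero i hp)).mp hdvd
    refine ⟨0, Ideal.Quotient.mk _ (p ^ d * b), smul_zero _,
      smul_quotient_mk_eq_zero_iff.mpr ⟨b, by ring⟩, ?_⟩
    rw [zero_add, Algebra.smul_def, Ideal.Quotient.algebraMap_eq, ← map_mul]
    ring_nf

theorem one_notMem_ulmDenominator (hunit : ¬IsUnit p) (hi : 1 ≤ i) :
    (1 : R ⧸ Ideal.span {p ^ i}) ∉ ulmDenominator p i (R ⧸ Ideal.span {p ^ i}) := by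
  rw [mem_ulmDenominator_iff]
  rintro ⟨y, z, hy, -, hyz⟩
  obtain ⟨c, rfl⟩ := Ideal.Quotient.mk_surjective z
  have hpow : p ^ (i - 1) • Ideal.Quotient.mk (Ideal.span {p ^ i}) 1 = 0 := by
    rw [map_one, ← hyz, smul_add, hy, zero_add, smul_smul, ← pow_succ, Nat.sub_add_cancel hi]
    exact smul_quotient_mk_eq_zero_iff.mpr (dvd_mul_right _ _)
  rw [smul_quotient_mk_eq_zero_iff, mul_one, pow_dvd_pow_iff hp hunit] at hpow
  lia

theorem ulmInvariant_quotient_pow_self [hmax : (Ideal.span {p}).IsMaximal] (hi : 1 ≤ i) :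
    ulmInvariant p i (R ⧸ Ideal.span {p ^ i}) = 1 := by
  let := Ideal.Quotient.field (Ideal.span {p})
  have hunit : ¬IsUnit p := fun h => hmax.ne_top (Ideal.span_singleton_eq_top.mpr h)
  have htors (c : R) : Ideal.Quotient.mk (Ideal.span {p ^ i}) c ∈
      Submodule.torsionBy R (R ⧸ Ideal.span {p ^ i}) (p ^ i) :=
    (Submodule.mem_torsionBy_iff _ _).mpr (smul_quotient_mk_eq_zero_iff.mpr (dvd_mul_right _ _))
  refine rank_eq_one (Submodule.Quotient.mk ⟨Ideal.Quotient.mk _ 1, htors 1⟩) ?_ fun w => ?_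
  · rw [Ne, Submodule.Quotient.mk_eq_zero]
    exact one_notMem_ulmDenominator hp hunit hi
  · obtain ⟨⟨x, hx⟩, rfl⟩ := Submodule.Quotient.mk_surjective _ w
    obtain ⟨c, rfl⟩ := Ideal.Quotient.mk_surjective x
    refine ⟨Ideal.Quotient.mk _ c, ?_⟩
    change c • (Submodule.Quotient.mk _ : UlmQuotient p i _) = _
    rw [← Submodule.Quotient.mk_smul]
    refine congrArg _ (Subtype.ext ?_)
    change c • Ideal.Quotient.mk (Ideal.span {p ^ i}) 1 = _
    rw [Algebra.smul_def, map_one, mul_one, Ideal.Quotient.algebraMap_eq]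

end Cyclic

end Ulm

section Cardinal

theorem lift_mk_subtype_eq_cardinalSum {ι : Type v} (s : ι → Prop) [DecidablePred s] :
    lift.{w} #{a // s a} = Cardinal.sum fun a => if s a then (1 : Cardinal.{w}) else 0 := by
  have hmk (a : ι) : (if s a then 1 else 0 : Cardinal.{w}) = #(ULift.{w} (PLift (s a))) := by
    split_ifs with h <;> simp [h]
  simp only [hmk]
  rw [← mk_sigma, ← mk_uLift]
  exact mk_congr (Equiv.ulift.trans (Equiv.sigmaULiftPLiftEquivSubtype s).symm)

theorem cardinalSum_sigma {ι : Type u} {α : ι → Type v} (c : (Σ i, α i) → Cardinal.{w}) :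
    Cardinal.sum c = Cardinal.sum fun i => Cardinal.sum fun x => c ⟨i, x⟩ := by
  have hassoc : #(Σ a, (c a).out) = #(Σ i, Σ x, (c ⟨i, x⟩).out) :=
    mk_congr.{max u v w} (Equiv.sigmaAssoc fun i x => (c ⟨i, x⟩).out)
  simpa only [mk_sigma, mk_out] using hassoc

theorem cardinalSum_option {ι : Type w} (c : Option ι → Cardinal.{v}) :
    Cardinal.sum c = lift.{w} (c none) + Cardinal.sum fun a => c (some a) := by
  have h : #(Σ a, (c a).out) = #((c none).out ⊕ Σ a, (c (some a)).out) := mk_congr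
    { toFun
        | ⟨none, x⟩ => .inl x
        | ⟨some a, x⟩ => .inr ⟨a, x⟩
      invFun
        | .inl x => ⟨none, x⟩
        | .inr ⟨a, x⟩ => ⟨some a, x⟩
      left_inv := by rintro ⟨_ | a, x⟩ <;> rfl
      right_inv := by rintro (x | ⟨a, x⟩) <;> rfl }
  simp only [mk_sigma, mk_sum, mk_out] at h
  rwa [lift_umax.{v, w}, lift_id'.{v, w}] at h

theorem cardinalSum_eq_lift_sum {ι : Type w} [hι : Fintype ι] (c : ι → Cardinal.{v}) :
    Cardinal.sum c = lift.{w} (∑ a, c a) := by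
  revert c
  refine Fintype.induction_empty_option ?_ ?_ ?_ ι (h_fintype := hι)
  · intro α β _ e ih c
    let := Fintype.ofEquiv β e.symm
    rw [← e.sum_comp c, ← ih]
    simpa using (mk_congr (e.sigmaCongrLeft (β := fun b => (c b).out))).symm
  · intro c
    rw [Finset.univ_eq_empty, Finset.sum_empty, lift_zero, ← mk_eq_zero (Σ a, (c a).out), mk_sigma]
    simp only [mk_out]
  · intro α _ ih c
    rw [cardinalSum_option, ih, Fintype.sum_option, lift_add]

theorem cardinalSum_sigma_natCast {ι : Type w} [Fintype ι] (B : ι → Type v) (d : ι → ℕ) :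
    Cardinal.sum (fun a : Σ s, B s => (d a.1 : Cardinal.{u})) =
      lift.{max u w} (∑ s, #(B s) * d s) := by
  have hlift : lift.{max u w} (∑ s, #(B s) * d s) = lift.{u} (lift.{w} (∑ s, #(B s) * d s)) := by
    rw [lift_lift]
  rw [hlift, ← cardinalSum_eq_lift_sum, lift_sum, cardinalSum_sigma]
  simp

theorem mk_sigma_fst_fiber {ι : Type w} (B : ι → Type v) (s : ι) :
    #{a : Σ t, B t // a.1 = s} = lift.{w} #(B s) := by
  have h := mk_congr_lift (Equiv.sigmaSubtype (β := B) s)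
  rwa [lift_umax.{v, w}, lift_id'.{v, w}] at h

theorem finset_sum_mul_natCast_eq_of_aleph0_le {ι : Type*} {s : Finset ι} {c : ι → Cardinal.{v}}
    {d : ι → ℕ} {κ : Cardinal.{v}} (hκ : ℵ₀ ≤ κ) (hc : ∀ a ∈ s, c a ≤ κ)
    (hmax : ∃ a ∈ s, c a = κ ∧ d a ≠ 0) : ∑ a ∈ s, c a * d a = κ := by
  have hd (a : ι) : (d a : Cardinal.{v}) ≤ κ := (natCast_lt_aleph0.le).trans hκ
  refine le_antisymm (Finset.sum_induction _ (· ≤ κ) (fun _ _ => add_le_of_le hκ) zero_le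
    fun a ha => mul_le_of_le hκ (hc a ha) (hd a)) ?_
  obtain ⟨a, ha, rfl, hda⟩ := hmax
  calc c a = c a * d a := (mul_eq_left hκ (hd a) (Nat.cast_ne_zero.mpr hda)).symm
    _ ≤ ∑ a ∈ s, c a * d a :=
      Finset.single_le_sum (f := fun a => c a * d a) (fun _ _ => zero_le) ha

theorem sum_sum_Icc_mul_natCast_eq_of_aleph0_le {J : Type*} [Fintype J] {n : J → ℕ}
    {c : J → ℕ → Cardinal.{v}} {d : J → ℕ → ℕ} {κ : Cardinal.{v}} (hκ : ℵ₀ ≤ κ)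
    (hc : ∀ j i, 1 ≤ i → i ≤ n j → c j i ≤ κ) (hd : ∀ j i, 1 ≤ i → d j i ≠ 0)
    (hmax : ∃ j i, 1 ≤ i ∧ i ≤ n j ∧ c j i = κ) :
    ∑ j, ∑ i ∈ Finset.Icc 1 (n j), c j i * d j i = κ := by
  obtain ⟨j, i, hi, hin, hji⟩ := hmax
  rw [Finset.sum_sigma']
  refine finset_sum_mul_natCast_eq_of_aleph0_le hκ (fun a ha => ?_)
    ⟨⟨j, i⟩, Finset.mem_sigma.mpr ⟨Finset.mem_univ j, Finset.mem_Icc.mpr ⟨hi, hin⟩⟩, hji, hd j i hi⟩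
  obtain ⟨ha1, han⟩ := Finset.mem_Icc.mp (Finset.mem_sigma.mp ha).2
  exact hc a.1 a.2 ha1 han

end Cardinal

section Polynomial

variable {k : Type u} [Field k] {V : Type v} [AddCommGroup V] [Module k V]

theorem exists_aeval'_equiv {M : Type*} [AddCommMonoid M] [Module k M] [Module k[X] M]
    [IsScalarTower k k[X] M] (e : V ≃ₗ[k] M) :
    ∃ f : Module.End k V, Nonempty (Module.AEval' f ≃ₗ[k[X]] M) :=
  ⟨e.symm.conj (Algebra.lsmul k k M (X : k[X])), ⟨.ofAEval _ e fun x => by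
    simp [LinearEquiv.conj_apply]⟩⟩

theorem rank_directSum_quotient_span {ι : Type w} {q : ι → k[X]} (hq : ∀ a, q a ≠ 0) :
    Module.rank k (⨁ a, k[X] ⧸ Ideal.span {q a}) =
      Cardinal.sum fun a => ((q a).natDegree : Cardinal.{u}) := by
  have hrank (a : ι) : Module.rank k (k[X] ⧸ Ideal.span {q a}) = (q a).natDegree := by
    have : Module.Finite k (k[X] ⧸ Ideal.span {q a}) := (AdjoinRoot.powerBasis (hq a)).finite
    rw [← finrank_eq_rank, finrank_quotient_span_eq_natDegree]
  rw [rank_directSum]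
  simp only [hrank]

section Model

variable {ι : Type w} {q : ι → k[X]} {f : Module.End k V}
  (e : Module.AEval' f ≃ₗ[k[X]] ⨁ a, k[X] ⧸ Ideal.span {q a})
include e

theorem minpoly_dvd_iff_of_aeval'_equiv {g : k[X]} : minpoly k f ∣ g ↔ ∀ a, q a ∣ g := by
  rw [minpoly.dvd_iff, ← RingHom.mem_ker, ← Module.AEval.annihilator_eq_ker_aeval (M := V),
    e.annihilator_eq]
  change g ∈ annihilator k[X] (Π₀ a, k[X] ⧸ Ideal.span {q a}) ↔ _
  rw [Module.annihilator_dfinsupp]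
  simp only [Ideal.mem_iInf, Ideal.annihilator_quotient, Ideal.mem_span_singleton]

theorem minpoly_eq_of_aeval'_equiv {Q : k[X]} (hQ : Q.Monic)
    (h : ∀ g, Q ∣ g ↔ ∀ a, q a ∣ g) : minpoly k f = Q := by
  have hdvd (g : k[X]) : minpoly k f ∣ g ↔ Q ∣ g :=
    (minpoly_dvd_iff_of_aeval'_equiv e).trans (h g).symm
  have hint : IsIntegral k f := ⟨Q, hQ, (minpoly.dvd_iff).mp ((hdvd Q).mpr dvd_rfl)⟩
  exact eq_of_monic_of_associated (minpoly.monic hint) hQ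
    (associated_of_dvd_dvd ((hdvd _).mpr dvd_rfl) ((hdvd _).mp dvd_rfl))

theorem lift_nu_eq_of_aeval'_equiv {p : k[X]} (hp : Irreducible p) {i : ℕ} (hi : 1 ≤ i)
    (hq : ∀ a, IsCoprime p (q a) ∨ ∃ m, q a = p ^ m) :
    lift.{max u w} (nu f p i) = lift.{max u v} #{a // q a = p ^ i} := by
  classical
  have : (Ideal.span {p}).IsMaximal := PrincipalIdealRing.isMaximal_of_irreducible hp
  have hcyclic (a : ι) :
      ulmInvariant p i (k[X] ⧸ Ideal.span {q a}) = if q a = p ^ i then 1 else 0 := by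
    split_ifs with ha
    · rw [ha, ulmInvariant_quotient_pow_self hp.ne_zero hi]
    · obtain hcop | ⟨m, hm⟩ := hq a
      · exact ulmInvariant_quotient_of_isCoprime hcop
      · rw [hm] at ha ⊢
        exact ulmInvariant_quotient_pow_of_ne hp.ne_zero (ne_of_apply_ne _ ha)
  have h := lift_ulmInvariant_congr (p := p) (i := i) (N := ⨁ a, k[X] ⧸ Ideal.span {q a}) e
  rw [ulmInvariant_directSum] at h
  simp only [hcyclic, ← lift_mk_subtype_eq_cardinalSum] at h
  rwa [lift_lift] at h

end Model

theorem exists_aeval'_equiv_directSum {ι : Type w} [Fintype ι] {q : ι → k[X]}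
    (hq : ∀ s, q s ≠ 0) (B : ι → Type v)
    (hrank : Module.rank k V = ∑ s, #(B s) * (q s).natDegree) :
    ∃ f : Module.End k V,
      Nonempty (Module.AEval' f ≃ₗ[k[X]] ⨁ a : Σ s, B s, k[X] ⧸ Ideal.span {q a.1}) := by
  obtain ⟨e⟩ : Nonempty (V ≃ₗ[k] ⨁ a : Σ s, B s, k[X] ⧸ Ideal.span {q a.1}) := by
    refine nonempty_linearEquiv_of_lift_rank_eq ?_
    rw [rank_directSum_quotient_span (q := fun a : Σ s, B s => q a.1) fun a => hq a.1,
      cardinalSum_sigma_natCast B fun s => (q s).natDegree, hrank, lift_lift]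
  exact exists_aeval'_equiv e

theorem pairwise_isCoprime_of_irreducible {J : Type*} {p : J → k[X]} (hmonic : ∀ j, (p j).Monic)
    (hirr : ∀ j, Irreducible (p j)) (hp : Function.Injective p) :
    Pairwise (Function.onFun IsCoprime p) := fun _ _ hne =>
  ((hirr _).coprime_iff_not_dvd).mpr fun hdvd => hne <| hp <|
    eq_of_monic_of_associated (hmonic _) (hmonic _) ((hirr _).associated_of_dvd (hirr _) hdvd)

section Coprime

variable {R : Type*} [CommRing R] {J : Type w} {p : J → R}

theorem pow_eq_pow_iff_of_pairwise_isCoprime [IsDomain R] (hunit : ∀ j, ¬IsUnit (p j))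
    (hne_zero : ∀ j, p j ≠ 0) (hcop : Pairwise (Function.onFun IsCoprime p)) {j j' : J}
    {i i' : ℕ} (hi : i ≠ 0) : p j ^ i = p j' ^ i' ↔ j = j' ∧ i = i' := by
  refine ⟨fun h => ?_, fun ⟨hj, hi'⟩ => by rw [hj, hi']⟩
  obtain rfl : j = j' := by
    by_contra hne
    have hself : IsCoprime (p j ^ i) (p j' ^ i') := (hcop hne).pow
    rw [← h, isCoprime_self, isUnit_pow_iff hi] at hself
    exact hunit j hself
  exact ⟨rfl, pow_injective_of_not_isUnit (hunit j) (hne_zero j) h⟩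

theorem prod_pow_dvd_iff [Fintype J] (hcop : Pairwise (Function.onFun IsCoprime p)) {n : J → ℕ}
    {g : R} : ∏ j, p j ^ n j ∣ g ↔ ∀ j, p j ^ n j ∣ g :=
  ⟨fun h j => (Finset.dvd_prod_of_mem (fun j => p j ^ n j) (Finset.mem_univ j)).trans h,
    fun h => Finset.prod_dvd_of_coprime (fun _ _ _ _ hne => (hcop hne).pow) fun j _ => h j⟩

end Coprime

end Polynomial

theorem stmt_12_general {k : Type u} [Field k] {V : Type v} [AddCommGroup V] [Module k V]
    {J : Type w} [Fintype J] (p : J → k[X]) (n : J → ℕ)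
    (hmonic : ∀ j, (p j).Monic) (hirr : ∀ j, Irreducible (p j)) (hp : Function.Injective p)
    (ν : J → ℕ → Cardinal.{v}) (hlast : ∀ j, 1 ≤ n j → ν j (n j) ≠ 0)
    (hdim : Module.rank k V =
      ∑ j, ∑ i ∈ Finset.Icc 1 (n j), ν j i * (i * (p j).natDegree : ℕ)) :
    ∃ f : Module.End k V, minpoly k f = ∏ j, p j ^ n j ∧
      ∀ j, ∀ i, 1 ≤ i → i ≤ n j → nu f (p j) i = ν j i := by
  have hcop := pairwise_isCoprime_of_irreducible hmonic hirr hp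
  let S := Σ j, Finset.Icc 1 (n j)
  let q (s : S) : k[X] := p s.1 ^ (s.2 : ℕ)
  obtain ⟨B, hB⟩ : ∃ B : S → Type v, ∀ s, #(B s) = ν s.1 s.2 :=
    ⟨fun s => (ν s.1 s.2).out, fun s => mk_out _⟩
  have hrank : Module.rank k V = ∑ s, #(B s) * (q s).natDegree := by
    simp only [hdim, hB, q, S, natDegree_pow, Fintype.sum_sigma]
    exact Finset.sum_congr rfl fun j _ => (Finset.sum_coe_sort (Finset.Icc 1 (n j)) _).symm
  obtain ⟨f, ⟨e⟩⟩ := exists_aeval'_equiv_directSum (q := q)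
    (fun s => pow_ne_zero _ (hirr s.1).ne_zero) B hrank
  refine ⟨f, minpoly_eq_of_aeval'_equiv e (monic_prod_of_monic _ _ fun j _ => (hmonic j).pow _)
    fun g => (prod_pow_dvd_iff hcop).trans ⟨fun h a => ?_, fun h j => ?_⟩, fun j i hi hin => ?_⟩
  · exact (pow_dvd_pow _ (Finset.mem_Icc.mp a.1.2.2).2).trans (h a.1.1)
  · obtain hn | hn := (n j).eq_zero_or_pos
    · simp [hn]
    · let top : S := ⟨j, n j, Finset.mem_Icc.mpr ⟨hn, le_rfl⟩⟩
      obtain ⟨b⟩ : Nonempty (B top) := mk_ne_zero_iff.mp (hB top ▸ hlast j hn)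
      exact h ⟨top, b⟩
  · let s : S := ⟨j, i, Finset.mem_Icc.mpr ⟨hi, hin⟩⟩
    have hfiber (a : Σ s, B s) : q a.1 = p j ^ i ↔ a.1 = s := by
      obtain ⟨⟨j', i', hi'⟩, b⟩ := a
      refine ⟨fun h => ?_, fun h => by rw [h]⟩
      obtain ⟨rfl, rfl⟩ := (pow_eq_pow_iff_of_pairwise_isCoprime (fun j => (hirr j).not_isUnit)
        (fun j => (hirr j).ne_zero) hcop (Nat.one_le_iff_ne_zero.mp hi)).mp h.symm
      rfl
    have hnu := lift_nu_eq_of_aeval'_equiv e (hirr j) hi fun a => by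
      obtain rfl | hne := eq_or_ne j a.1.1
      · exact .inr ⟨_, rfl⟩
      · exact .inl (hcop hne).pow_right
    rw [mk_congr (Equiv.subtypeEquivRight hfiber), mk_sigma_fst_fiber, hB, lift_lift] at hnu
    exact lift_inj.mp hnu

/-- Let `V` be a `k`-vector space of countably infinite dimension.  Let
`p_1(x), …, p_r(x)` be distinct monic irreducible polynomials in `k[x]`, let
`n_1, …, n_r ≥ 1` be natural numbers, and for each `1 ≤ j ≤ r` and `1 ≤ i ≤ n_j` let `ν j i`
be a cardinal belonging to `{0} ∪ ℕ ∪ {ℵ₀}` (i.e. `ν j i ≤ ℵ₀`), such that `ν j (n j) ≠ 0`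
for every `j` and `ν j i = ℵ₀` for at least one pair `(j, i)`.  Then there exists an
endomorphism `f` of `V` with annihilator polynomial `a_f(x) = p_1(x)^{n_1} ⋯ p_r(x)^{n_r}`
and with `ν_i(V, p_j(f)) = ν j i` for all `1 ≤ j ≤ r` and `1 ≤ i ≤ n_j`. -/
theorem stmt_12 {k : Type u} [Field k] {V : Type v} [AddCommGroup V] [Module k V]
    (hdim : Module.rank k V = Cardinal.aleph0)
    (r : ℕ) (p : Fin r → k[X]) (n : Fin r → ℕ)
    (hmonic : ∀ j, (p j).Monic) (hirr : ∀ j, Irreducible (p j))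
    (hdist : ∀ j j', j ≠ j' → p j ≠ p j')
    (hn : ∀ j, 1 ≤ n j)
    (ν : Fin r → ℕ → Cardinal.{v})
    (hν : ∀ j i, 1 ≤ i → i ≤ n j → ν j i ≤ Cardinal.aleph0)
    (hlast : ∀ j, ν j (n j) ≠ 0)
    (hinf : ∃ j i, 1 ≤ i ∧ i ≤ n j ∧ ν j i = Cardinal.aleph0) :
    ∃ f : Module.End k V, minpoly k f = ∏ j, p j ^ n j ∧
      ∀ j, ∀ i, 1 ≤ i → i ≤ n j → nu f (p j) i = ν j i :=
  stmt_12_general p n hmonic hirr (fun j j' => not_imp_not.mp (hdist j j')) ν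
    (fun j _ => hlast j) <| hdim.trans (sum_sum_Icc_mul_natCast_eq_of_aleph0_le le_rfl hν
      (fun j _ hi => Nat.mul_ne_zero (Nat.pos_iff_ne_zero.mp hi) (hirr j).natDegree_pos.ne')
      hinf).symm
end
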